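/- For all integers m ≥ n ≥ 9, the product P(m,n) = ∏_{i=1}^{n}(m+i) of n consecutive integers each strictly greater than n is divisible by at least three distinct primes strictly greater than n. -/

import Mathlib

/-- `P m n = ∏_{i=1}^n (m+i)`. -/
def P (m n : ℕ) : ℕ := ∏ i ∈ Finset.Icc 1 n, (m + i)

theorem P_eq (m n : ℕ) : P m n = n.factorial * (m + n).choose n := by
  rw [← Nat.ascFactorial_eq_factorial_mul_choose]
  unfold P
  induction n with
  | zero => simp
  | succ k ih =>
    rw [Finset.prod_Icc_succ_top (by omega), ih, Nat.ascFactorial_succ]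
    ring

theorem P_pos (m n : ℕ) : 0 < P m n := by
  rw [P_eq]; exact Nat.mul_pos (Nat.factorial_pos _) (Nat.choose_pos (by omega))

theorem P_lower (m n : ℕ) : (m + 1) ^ n ≤ P m n := by
  unfold P
  calc (m + 1) ^ n = ∏ i ∈ Finset.Icc 1 n, (m + 1) := by simp
    _ ≤ _ := Finset.prod_le_prod' (fun i hi => by simp at hi; omega)

/-- Three explicit large primes dividing the product suffice. -/
theorem three_primes {m n p q r : ℕ} (hp : p.Prime) (hq : q.Prime) (hr : r.Prime)
    (hnp : n < p) (hpq : p < q) (hqr : q < r) (dp : p ∣ P m n) (dq : q ∣ P m n) (dr : r ∣ P m n) :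
    ((P m n).primeFactors.filter (fun p => n < p)).card ≥ 3 := by
  have h0 := (P_pos m n).ne'
  have hsub : ({p, q, r} : Finset ℕ) ⊆ (P m n).primeFactors.filter (fun p => n < p) := by
    intro x hx
    simp only [Finset.mem_insert, Finset.mem_singleton] at hx
    rw [Finset.mem_filter, Nat.mem_primeFactors]
    rcases hx with rfl | rfl | rfl
    · exact ⟨⟨hp, dp, h0⟩, by omega⟩
    · exact ⟨⟨hq, dq, h0⟩, by omega⟩
    · exact ⟨⟨hr, dr, h0⟩, by omega⟩
  have hc : ({p, q, r} : Finset ℕ).card = 3 := by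
    rw [Finset.card_eq_three]
    exact ⟨p, q, r, by omega, by omega, by omega, rfl⟩
  rw [← hc]
  exact Finset.card_le_card hsub

theorem dvd_P {m n k p : ℕ} (h1 : m < k) (h2 : k ≤ m + n) (hd : p ∣ k) : p ∣ P m n := by
  unfold P
  refine hd.trans ?_
  have := Finset.dvd_prod_of_mem (fun i => m + i) (a := k - m) (s := Finset.Icc 1 n)
    (by simp; omega)
  simpa [Nat.add_sub_cancel' h1.le] using this

/-- The upper bound for the binomial coefficient when few large primes divide it. -/
theorem choose_upper {m n : ℕ} (hn : 1 ≤ n)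
    (h : ((P m n).primeFactors.filter (fun p => n < p)).card ≤ 2) :
    (m + n).choose n ≤ (m + n) ^ 2 *
      ∏ p ∈ ((m + n).choose n).primeFactors.filter (fun p => ¬ n < p),
        p ^ ((m + n).choose n).factorization p := by
  have hC : (m + n).choose n ≠ 0 := (Nat.choose_pos (by omega)).ne'
  conv_lhs => rw [← Nat.prod_factorization_pow_eq_self hC]
  rw [Nat.prod_factorization_eq_prod_primeFactors,
    ← Finset.prod_filter_mul_prod_filter_not _ (fun p => n < p)]
  refine Nat.mul_le_mul_right _ ?_
  have hsub : ((m + n).choose n).primeFactors.filter (fun p => n < p) ⊆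
      (P m n).primeFactors.filter (fun p => n < p) := by
    refine Finset.filter_subset_filter _ (Nat.primeFactors_mono ?_ (P_pos m n).ne')
    rw [P_eq]; exact Dvd.intro_left _ rfl
  calc _ ≤ (m + n) ^ (((m + n).choose n).primeFactors.filter (fun p => n < p)).card :=
        Finset.prod_le_pow_card _ _ _ (fun p _ => Nat.pow_factorization_choose_le (by omega))
    _ ≤ _ := Nat.pow_le_pow_right (by omega) ((Finset.card_le_card hsub).trans h)

theorem choose_upper_pi {m n : ℕ} (hn : 1 ≤ n)
    (h : ((P m n).primeFactors.filter (fun p => n < p)).card ≤ 2) :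
    (m + n).choose n ≤ (m + n) ^ (Nat.primeCounting n + 2) := by
  refine (choose_upper hn h).trans ?_
  rw [add_comm (Nat.primeCounting n), pow_add]
  refine Nat.mul_le_mul_left _ ?_
  refine (Finset.prod_le_pow_card _ _ _
    (fun p _ => Nat.pow_factorization_choose_le (by omega))).trans ?_
  refine Nat.pow_le_pow_right (by omega) ?_
  rw [← Nat.primesLE_card_eq_primeCounting]
  refine Finset.card_le_card ?_
  intro p hp
  rw [Finset.mem_filter] at hp
  rw [Nat.mem_primesLE]
  exact ⟨by omega, Nat.prime_of_mem_primeFactors hp.1⟩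

theorem choose_upper_sqrt {m n M : ℕ} (hn : 1 ≤ n)
    (h : ((P m n).primeFactors.filter (fun p => n < p)).card ≤ 2)
    (hM : ∀ p, p.Prime → p ≤ n → m + n < p ^ 2 → ((m + n).choose n).factorization p ≠ 0 → p ≤ M) :
    (m + n).choose n ≤ (m + n) ^ (Nat.primeCounting (Nat.sqrt (m + n)) + 2) * 4 ^ M := by
  refine (choose_upper hn h).trans ?_
  rw [add_comm (Nat.primeCounting _), pow_add, mul_assoc]
  refine Nat.mul_le_mul_left _ ?_
  rw [← Finset.prod_filter_mul_prod_filter_not _ (fun p => p ≤ Nat.sqrt (m + n))]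
  refine Nat.mul_le_mul ?_ ?_
  · refine (Finset.prod_le_pow_card _ _ _
      (fun p _ => Nat.pow_factorization_choose_le (by omega))).trans ?_
    refine Nat.pow_le_pow_right (by omega) ?_
    rw [← Nat.primesLE_card_eq_primeCounting]
    refine Finset.card_le_card ?_
    intro p hp
    rw [Finset.mem_filter, Finset.mem_filter] at hp
    rw [Nat.mem_primesLE]
    exact ⟨hp.2, Nat.prime_of_mem_primeFactors hp.1.1⟩
  · refine le_trans ?_ (primorial_le_four_pow M)
    rw [primorial_eq_prod_primesLE]
    have key : ∀ p ∈ Finset.filter (fun p => ¬ p ≤ Nat.sqrt (m + n))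
        (((m + n).choose n).primeFactors.filter (fun p => ¬ n < p)),
        p ^ ((m + n).choose n).factorization p ≤ p ∧ p ∈ Nat.primesLE M := by
      intro p hp
      rw [Finset.mem_filter, Finset.mem_filter] at hp
      have hpp := Nat.prime_of_mem_primeFactors hp.1.1
      have hlt : m + n < p ^ 2 := by
        rw [pow_two]; exact Nat.sqrt_lt.1 (by omega)
      constructor
      · calc p ^ ((m + n).choose n).factorization p ≤ p ^ 1 :=
            Nat.pow_le_pow_right hpp.pos (Nat.factorization_choose_le_one hlt)
          _ = p := pow_one p
      · rw [Nat.mem_primesLE]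
        refine ⟨hM p hpp (by omega) hlt ?_, hpp⟩
        have := hp.1.1
        rw [← Nat.support_factorization, Finsupp.mem_support_iff] at this
        exact this
    refine (Finset.prod_le_prod' (fun p hp => (key p hp).1)).trans ?_
    refine Finset.prod_le_prod_of_subset_of_one_le' (fun p hp => (key p hp).2) ?_
    intro p hp _
    exact (Nat.mem_primesLE.1 hp).2.one_le

/-- For `m ≥ K n` the binomial coefficient would be too large. -/
theorem trick {m n K a : ℕ} (hn : 1 ≤ n) (hK : K * n ≤ m)
    (ha : Nat.primeCounting n + 2 ≤ a) (han : a ≤ n)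
    (h : ((P m n).primeFactors.filter (fun p => n < p)).card ≤ 2) :
    (K * n) ^ (n - a) * K ^ a ≤ (K + 1) ^ a * n.factorial := by
  have h1 : (m + 1) ^ n ≤ n.factorial * (m + n) ^ a := by
    refine (P_lower m n).trans ?_
    rw [P_eq]
    refine Nat.mul_le_mul_left _ ((choose_upper_pi hn h).trans ?_)
    exact Nat.pow_le_pow_right (by omega) ha
  have h2 : (m + n) ^ a * K ^ a ≤ (m + 1) ^ a * (K + 1) ^ a := by
    rw [← mul_pow, ← mul_pow]
    exact Nat.pow_le_pow_left (by nlinarith) a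
  have h3 : (m + 1) ^ a * ((m + 1) ^ (n - a) * K ^ a) ≤
      (m + 1) ^ a * ((K + 1) ^ a * n.factorial) := by
    calc (m + 1) ^ a * ((m + 1) ^ (n - a) * K ^ a) = (m + 1) ^ n * K ^ a := by
          rw [← mul_assoc, ← pow_add]; congr 2; omega
      _ ≤ n.factorial * (m + n) ^ a * K ^ a := Nat.mul_le_mul_right _ h1
      _ = n.factorial * ((m + n) ^ a * K ^ a) := by ring
      _ ≤ n.factorial * ((m + 1) ^ a * (K + 1) ^ a) := Nat.mul_le_mul_left _ h2
      _ = _ := by ring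
  have h4 := Nat.le_of_mul_le_mul_left h3 (by positivity)
  refine le_trans (Nat.mul_le_mul_right _ (Nat.pow_le_pow_left (by omega) _)) h4

/-- Lower bound for binomial coefficients. -/
theorem choose_lower {n : ℕ} (hn : 1 ≤ n) (r : ℕ) (hr : r ≤ n) :
    4 ^ n * 3 ^ r ≤ 2 * n * 2 ^ r * (2 * n + r).choose n := by
  induction r with
  | zero =>
    have := Nat.four_pow_le_two_mul_self_mul_centralBinom n (by omega)
    simpa [Nat.centralBinom] using this
  | succ r ih =>
    have ih := ih (by omega)
    have e := Nat.choose_mul_succ_eq (2 * n + r) n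
    have e' : 2 * n + r + 1 - n = n + r + 1 := by omega
    rw [e'] at e
    have h1 : 3 * (2 * n + r).choose n ≤ 2 * (2 * n + (r + 1)).choose n := by
      rw [← add_assoc]
      refine Nat.le_of_mul_le_mul_right (c := n + r + 1) ?_ (by omega)
      calc 3 * (2 * n + r).choose n * (n + r + 1)
          = (2 * n + r).choose n * (3 * (n + r + 1)) := by ring
        _ ≤ (2 * n + r).choose n * (2 * (2 * n + r + 1)) :=
          Nat.mul_le_mul_left _ (by omega)
        _ = 2 * ((2 * n + r).choose n * (2 * n + r + 1)) := by ring
        _ = _ := by rw [e]; ring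
    calc 4 ^ n * 3 ^ (r + 1) = 3 * (4 ^ n * 3 ^ r) := by ring
      _ ≤ 3 * (2 * n * 2 ^ r * (2 * n + r).choose n) := Nat.mul_le_mul_left _ ih
      _ = 2 * n * 2 ^ r * (3 * (2 * n + r).choose n) := by ring
      _ ≤ 2 * n * 2 ^ r * (2 * (2 * n + (r + 1)).choose n) := Nat.mul_le_mul_left _ h1
      _ = _ := by ring
def bigM : ℕ := 2 * 3 * 5 * 7 * 11 * 13 * 17 * 19 * 23 * 29 * 31 * 37 * 41 * 43

/-- A necessary condition for primality. -/
def isP (n : ℕ) : Bool := Nat.gcd n bigM == 1 || [2, 3, 5, 7, 11, 13, 17, 19, 23, 29, 31, 37, 41, 43].contains n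

theorem isP_of_prime {n : ℕ} (h : n.Prime) : isP n = true := by
  unfold isP
  by_cases h1 : n ≤ 43
  · interval_cases n <;> first | rfl | (exact absurd h (by norm_num))
  · have : Nat.gcd n bigM = 1 := by
      rw [← Nat.coprime_iff_gcd_eq_one]
      rw [Nat.Prime.coprime_iff_not_dvd h]
      unfold bigM
      intro hd
      simp only [h.dvd_mul] at hd
      have : ∀ k, 0 < k → k ≤ 43 → ¬ n ∣ k := fun k hk hk' hd => by
        have := Nat.le_of_dvd hk hd; omega
      simp [this] at hd
    simp [this]

def loop (K : ℕ) : ℕ → ℕ → ℕ → ℕ → Bool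
  | 0, _, _, _ => true
  | k + 1, n, a, f => Nat.ble a n && Nat.ble ((K + 1) ^ a * f + 1) ((K * n) ^ (n - a) * K ^ a) &&
      loop K k (n + 1) (bif isP (n + 1) then a + 1 else a) (f * (n + 1))

theorem loop_spec (K : ℕ) (k : ℕ) : ∀ n a f, loop K k n a f = true → Nat.primeCounting n + 2 ≤ a →
    f = n.factorial → ∀ j < k, ∃ b, Nat.primeCounting (n + j) + 2 ≤ b ∧ b ≤ n + j ∧
      (K + 1) ^ b * (n + j).factorial < (K * (n + j)) ^ (n + j - b) * K ^ b := by
  induction k with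
  | zero => intro n a f _ _ _ j hj; omega
  | succ k ih =>
    intro n a f hl ha hf j hj
    simp only [loop, Bool.and_eq_true, Nat.ble_eq] at hl
    obtain ⟨⟨h1, h2⟩, h3⟩ := hl
    rcases j with _ | j
    · exact ⟨a, ha, h1, by subst hf; exact h2⟩
    · have := ih (n + 1) _ _ h3 ?_ ?_ j (by omega)
      · rw [show n + (j + 1) = n + 1 + j by ring]; exact this
      · have e : Nat.primeCounting (n + 1) = Nat.primeCounting n + if (n + 1).Prime then 1 else 0 := by
          simp only [Nat.primeCounting, Nat.primeCounting', Nat.count_succ]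
        rw [e]
        by_cases hp : (n + 1).Prime
        · simp [hp, isP_of_prime hp]; omega
        · simp only [hp, if_false]
          cases isP (n + 1) <;> simp <;> omega
      · rw [hf, Nat.factorial_succ]; ring
theorem loop1 : loop 10 12 9 6 362880 = true := by decide +kernel
theorem loop2 : loop 4 2027 21 10 51090942171709440000 = true := by decide +kernel

/-- All primes up to 223. -/
def smallPrimes : List ℕ := [
   2, 3, 5, 7, 11, 13, 17, 19, 23, 29, 31, 37, 41, 43, 47, 53, 59, 61, 67, 71, 73, 79, 83,
   89, 97, 101, 103, 107, 109, 113, 127, 131, 137, 139, 149, 151, 157, 163, 167, 173, 179,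
   181, 191, 193, 197, 199, 211, 223]

theorem smallPrimes_prime : ∀ p ∈ smallPrimes, p.Prime := by
  simp only [smallPrimes, List.forall_mem_cons, List.not_mem_nil, false_imp_iff, implies_true,
    and_true]
  norm_num

theorem smallPrimes_sorted : smallPrimes.Pairwise (· < ·) := by
  unfold smallPrimes; decide +kernel

def smallCheck (m n : ℕ) : Bool :=
  Nat.ble 3 (smallPrimes.filter (fun p => Nat.ble (n + 1) p && Nat.ble (m + 1) ((m + n) / p * p))).length

theorem smallCheck_spec {m n : ℕ} (h : smallCheck m n = true) :
    ((P m n).primeFactors.filter (fun p => n < p)).card ≥ 3 := by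
  unfold smallCheck at h
  rw [Nat.ble_eq] at h
  have hs := smallPrimes_sorted.filter
    (fun p => Nat.ble (n + 1) p && Nat.ble (m + 1) ((m + n) / p * p))
  have hm : ∀ p ∈ smallPrimes.filter
      (fun p => Nat.ble (n + 1) p && Nat.ble (m + 1) ((m + n) / p * p)),
      p.Prime ∧ n < p ∧ p ∣ P m n := by
    intro p hp
    rw [List.mem_filter] at hp
    obtain ⟨h1, h2⟩ := hp
    simp only [Bool.and_eq_true, Nat.ble_eq] at h2
    exact ⟨smallPrimes_prime p h1, h2.1,
      dvd_P (k := (m + n) / p * p) h2.2 (Nat.div_mul_le_self _ _) (Dvd.intro_left _ rfl)⟩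
  generalize smallPrimes.filter
    (fun p => Nat.ble (n + 1) p && Nat.ble (m + 1) ((m + n) / p * p)) = l at h hs hm
  match l, h, hs, hm with
  | p :: q :: r :: l, h, hs, hm =>
    simp only [List.pairwise_cons, List.mem_cons, forall_eq_or_imp] at hs
    simp only [List.mem_cons, forall_eq_or_imp] at hm
    obtain ⟨hp, hq, hr, -⟩ := hm
    exact three_primes hp.1 hq.1 hr.1 hp.2.1 hs.1.1 hs.2.1.1 hp.2.2 hq.2.2 hr.2.2

theorem small_all : ∀ n < 21, 9 ≤ n → ∀ m < 200, n ≤ m → m < 10 * n → smallCheck m n = true := by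
  decide +kernel

/-- A chain of primes without large gaps. -/
def chainPrimes : List ℕ := [
   13, 17, 19, 23, 29, 31, 37, 41, 43, 47, 53, 59, 61, 67, 73, 79, 83, 89, 97, 103, 109,
   113, 127, 137, 139, 149, 157, 167, 179, 193, 199, 211, 227, 241, 257, 277, 293, 317,
   337, 359, 383, 409, 443, 479, 509, 547, 587, 631, 683, 733, 787, 839, 907, 977, 1049,
   1129, 1217, 1307, 1409, 1511, 1627, 1759, 1889, 2029, 2179, 2357, 2531, 2719, 2939,
   3163, 3391, 3673, 3947, 4231, 4583, 4933, 5281, 5717, 6163, 6599, 7129, 7703, 8243,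
   8893, 9629]

theorem chainPrimes_prime : ∀ p ∈ chainPrimes, p.Prime := by
  simp only [chainPrimes, List.forall_mem_cons, List.not_mem_nil, false_imp_iff, implies_true,
    and_true]
  norm_num

def chainOk : List ℕ → Bool
  | a :: b :: c :: d :: l => Nat.ble d (a + max 21 (a / 4 + 1)) && Nat.ble (b + 1) c &&
      Nat.ble (c + 1) d && chainOk (b :: c :: d :: l)
  | [x, _, _] => Nat.ble 8193 x
  | _ => false

theorem chain_spec {m n : ℕ} (hmn : n ≤ m) (hn : 21 ≤ n) (hm : m < 4 * n) (hm2 : m < 8192) :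
    ∀ l : List ℕ, (∀ p ∈ l, p.Prime) → chainOk l = true → (∀ a ∈ l.head?, a ≤ m) →
    ((P m n).primeFactors.filter (fun p => n < p)).card ≥ 3
  | a :: b :: c :: d :: l, hp, hc, ha => by
    simp only [chainOk, Bool.and_eq_true, Nat.ble_eq] at hc
    obtain ⟨⟨⟨h1, h2⟩, h3⟩, h4⟩ := hc
    have ham : a ≤ m := ha a (by simp)
    by_cases hb : b ≤ m
    · exact chain_spec hmn hn hm hm2 (b :: c :: d :: l)
        (fun p hp' => hp p (List.mem_cons_of_mem _ hp')) h4 (by simpa using hb)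
    · simp only [List.mem_cons, forall_eq_or_imp] at hp
      obtain ⟨-, pb, pc, pd, -⟩ := hp
      have hd : d ≤ m + n := by
        rcases max_cases 21 (a / 4 + 1) with h | h <;> omega
      exact three_primes pb pc pd (by omega) h2 h3 (dvd_P (by omega) (by omega) (dvd_refl b))
        (dvd_P (by omega) (by omega) (dvd_refl c)) (dvd_P (by omega) hd (dvd_refl d))
  | [x, _, _], _, hc, ha => by
    simp only [chainOk, Nat.ble_eq] at hc
    have := ha x (by simp)
    omega
  | [_, _], _, hc, _ => by simp [chainOk] at hc
  | [_], _, hc, _ => by simp [chainOk] at hc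
  | [], _, hc, _ => by simp [chainOk] at hc

theorem chainPrimes_ok : chainOk chainPrimes = true := by decide +kernel

theorem small_case {m n : ℕ} (hmn : n ≤ m) (hn : 9 ≤ n) (hn2 : n < 2048) :
    ((P m n).primeFactors.filter (fun p => n < p)).card ≥ 3 := by
  by_contra hcon
  have hcard : ((P m n).primeFactors.filter (fun p => n < p)).card ≤ 2 := by omega
  by_cases h21 : n < 21
  · by_cases hm : m < 10 * n
    · exact hcon (smallCheck_spec (small_all n h21 hn m (by omega) hmn hm))
    · have p9 : Nat.primeCounting 9 = 4 := by decide +kernel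
      obtain ⟨b, h1, h2, h3⟩ := loop_spec 10 12 9 6 362880 loop1 (by omega)
        (by decide +kernel) (n - 9) (by omega)
      rw [show 9 + (n - 9) = n by omega] at h1 h2 h3
      have := trick (K := 10) (by omega) (by omega) h1 h2 hcard
      omega
  · by_cases hm : m < 4 * n
    · refine hcon (chain_spec hmn (by omega) hm (by omega) chainPrimes chainPrimes_prime
        chainPrimes_ok ?_)
      simp [chainPrimes]; omega
    · have p9 : Nat.primeCounting 21 = 8 := by decide +kernel
      obtain ⟨b, h1, h2, h3⟩ := loop_spec 4 2027 21 10 51090942171709440000 loop2 (by omega)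
        (by decide +kernel) (n - 21) (by omega)
      rw [show 21 + (n - 21) = n by omega] at h1 h2 h3
      have := trick (K := 4) (by omega) (by omega) h1 h2 hcard
      omega

theorem log_le_sqrt {n : ℕ} (hn : 2048 ≤ n) : Real.log n ≤ 6.3178 + √(n : ℝ) / 32 := by
  have hx : 0 < √(n : ℝ) := Real.sqrt_pos.2 (by positivity)
  have h1 : Real.log n = 2 * Real.log (√(n : ℝ)) := by
    rw [Real.log_sqrt (by positivity)]; ring
  have h2 := Real.log_le_sub_one_of_pos (show 0 < √(n : ℝ) / 64 by positivity)
  rw [Real.log_div hx.ne' (by norm_num), show (64 : ℝ) = 2 ^ 6 by norm_num, Real.log_pow] at h2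
  have := Real.log_two_lt_d9
  push_cast at h2
  linarith

theorem log17_lt : Real.log 17 < 2.8356 := by
  have h : Real.log ((17 : ℝ) / 16) ≤ 17 / 16 - 1 := Real.log_le_sub_one_of_pos (by norm_num)
  rw [Real.log_div (by norm_num) (by norm_num), show (16 : ℝ) = 2 ^ 4 by norm_num,
    Real.log_pow] at h
  have := Real.log_two_lt_d9
  push_cast at h
  linarith

theorem sqrt_ge {n : ℕ} (hn : 2048 ≤ n) : 45.25 ≤ √(n : ℝ) := by
  apply Real.le_sqrt_of_sq_le
  have : (2048 : ℝ) ≤ n := by exact_mod_cast hn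
  norm_num; linarith

theorem log_factorial_le {n : ℕ} (hn : 1 ≤ n) :
    Real.log n.factorial ≤ n * Real.log n - n + Real.log n / 2 + 1 := by
  have h := Stirling.log_stirlingSeq'_antitone (Nat.zero_le (n - 1))
  simp only [Function.comp, Nat.succ_eq_add_one, Nat.sub_add_cancel hn, zero_add] at h
  have hn' : (0 : ℝ) < n := by exact_mod_cast hn
  rw [Stirling.stirlingSeq_one, Stirling.log_stirlingSeq_formula,
    Real.log_div (Real.exp_pos 1).ne' (by positivity), Real.log_exp, Real.log_sqrt (by norm_num),
    Real.log_mul (by norm_num) hn'.ne', Real.log_div hn'.ne' (Real.exp_pos 1).ne',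
    Real.log_exp] at h
  nlinarith

theorem pi_le_three (s : ℕ) : Nat.primeCounting s ≤ s / 3 + 3 := by
  by_cases h : s < 6
  · exact (Nat.monotone_primeCounting (show s ≤ 5 by omega)).trans
      ((show Nat.primeCounting 5 = 3 by decide +kernel).le.trans (by omega))
  · have := Nat.primeCounting_add_le (a := 6) (k := 6) (by norm_num) le_rfl (s - 6)
    rw [show 6 + (s - 6) = s by omega, show Nat.primeCounting 6 = 3 by decide +kernel,
      show Nat.totient 6 = 2 by decide +kernel] at this
    omega

theorem pi_le_wheel {n : ℕ} (hn : 30 ≤ n) : 15 * Nat.primeCounting n ≤ 4 * n + 150 := by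
  have := Nat.primeCounting_add_le (a := 30) (k := 30) (by norm_num) le_rfl (n - 30)
  rw [show 30 + (n - 30) = n by omega, show Nat.primeCounting 30 = 10 by decide +kernel,
    show Nat.totient 30 = 8 by decide +kernel] at this
  omega

theorem large_high {m n : ℕ} (hn : 2048 ≤ n) (hm : 16 * n ≤ m)
    (h : ((P m n).primeFactors.filter (fun p => n < p)).card ≤ 2) : False := by
  have hw := pi_le_wheel (n := n) (by omega)
  have ht := trick (K := 16) (by omega) hm le_rfl (by omega) h
  have hle : Nat.primeCounting n + 2 ≤ n := by omega
  have hnR : (2048 : ℝ) ≤ n := by exact_mod_cast hn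
  have hch := Chebyshev.pi_le_log4_mul_div (x := n) (by linarith)
  rw [Nat.floor_natCast] at hch
  generalize Nat.primeCounting n = a at *
  have ht' : ((16 * n : ℝ)) ^ (n - (a + 2)) * 16 ^ (a + 2) ≤ 17 ^ (a + 2) * (n.factorial : ℝ) := by
    exact_mod_cast ht
  have hf : (0 : ℝ) < n.factorial := by exact_mod_cast n.factorial_pos
  have hl := Real.log_le_log (by positivity) ht'
  rw [Real.log_mul (by positivity) (by positivity), Real.log_mul (by positivity) (by positivity),
    Real.log_pow, Real.log_pow, Real.log_pow, Real.log_mul (by norm_num) (by positivity),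
    Nat.cast_sub hle, show Real.log 16 = 4 * Real.log 2 by
      rw [show (16 : ℝ) = 2 ^ 4 by norm_num, Real.log_pow]; norm_num] at hl
  push_cast at hl
  have hfac := log_factorial_le (n := n) (by omega)
  have hlog := log_le_sqrt hn
  have hx := sqrt_ge hn
  have hsq : √(n : ℝ) * √(n : ℝ) = n := Real.mul_self_sqrt (by positivity)
  have hwR : 15 * (a : ℝ) ≤ 4 * n + 150 := by exact_mod_cast hw
  have l17 := log17_lt
  have l2 := Real.log_two_gt_d9
  have l2' := Real.log_two_lt_d9
  have hlpos : 0 < Real.log n := Real.log_pos (by linarith)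
  rw [Real.log_sqrt (by positivity), show Real.log 4 = 2 * Real.log 2 by
      rw [show (4 : ℝ) = 2 ^ 2 by norm_num, Real.log_pow]; norm_num] at hch
  have hch2 : (a : ℝ) * Real.log n ≤ 4 * Real.log 2 * n + √(n : ℝ) * Real.log n := by
    have := mul_le_mul_of_nonneg_right hch hlpos.le
    have e : (2 * Real.log 2 * n / (Real.log n / 2) + √(n : ℝ)) * Real.log n =
      4 * Real.log 2 * n + √(n : ℝ) * Real.log n := by field_simp; ring
    linarith
  have h17 : (a : ℝ) * Real.log 17 ≤ a * 2.8356 := by gcongr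
  set x := √(n : ℝ)
  set l := Real.log n
  have hxl : x * l ≤ x * (6.3178 + x / 32) := by gcongr
  have ha0 : (0 : ℝ) ≤ a := by positivity
  have key : (n : ℝ) ≤ x * l + 2.5 * l + 1 + (a + 2) * 2.8356 := by nlinarith
  nlinarith

theorem large_low {m n : ℕ} (hn : 2048 ≤ n) (hmn : n ≤ m) (hm : m < 16 * n)
    (h : ((P m n).primeFactors.filter (fun p => n < p)).card ≤ 2) : False := by
  -- the common real inequality
  set N := m + n with hN
  set E := Nat.primeCounting (Nat.sqrt N) + 2 with hE
  have hnR : (2048 : ℝ) ≤ n := by exact_mod_cast hn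
  have l2 := Real.log_two_gt_d9
  have l2' := Real.log_two_lt_d9
  have l3 := Real.log_three_gt_d9
  have l3' := Real.log_three_lt_d9
  have l4 : Real.log 4 = 2 * Real.log 2 := by
      rw [show (4 : ℝ) = 2 ^ 2 by norm_num, Real.log_pow]; norm_num
  have hNpos : (0 : ℝ) < N := by exact_mod_cast (show 0 < N by omega)
  have main : (n : ℝ) * (Real.log 3 - Real.log 2) ≤ Real.log 2 + Real.log n + E * Real.log N := by
    by_cases hN3 : N < 3 * n
    · have hup := choose_upper_sqrt (M := N / 3) (by omega) h (by
        intro p hp hpn hlt hne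
        by_contra hcon
        apply hne
        apply Nat.factorization_choose_of_lt_three_mul
        · rintro rfl; omega
        · exact hpn
        · omega
        · omega)
      rw [← hN, ← hE] at hup
      obtain ⟨r, hr⟩ : ∃ r, N = 2 * n + r := ⟨N - 2 * n, by omega⟩
      have hlow := choose_lower (n := n) (by omega) r (by omega)
      rw [← hr] at hlow
      have hfin : 4 ^ n * 3 ^ r ≤ 2 * n * 2 ^ r * (N ^ E * 4 ^ (N / 3)) :=
        hlow.trans (Nat.mul_le_mul_left _ hup)
      have hfin' : (4 : ℝ) ^ n * 3 ^ r ≤ 2 * n * 2 ^ r * (N ^ E * 4 ^ (N / 3)) := by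
        exact_mod_cast hfin
      have hl := Real.log_le_log (by positivity) hfin'
      rw [Real.log_mul (by positivity) (by positivity), Real.log_mul (by positivity) (by positivity),
        Real.log_mul (by positivity) (by positivity), Real.log_mul (by positivity) (by positivity),
        Real.log_mul (by positivity) (by positivity),
        Real.log_pow, Real.log_pow, Real.log_pow, Real.log_pow, Real.log_pow, l4] at hl
      have hdiv : ((N / 3 : ℕ) : ℝ) ≤ (2 * n + r) / 3 := by
        have : ((N / 3 : ℕ) : ℝ) ≤ (N : ℝ) / 3 := by exact_mod_cast Nat.cast_div_le
        rw [hr] at this ⊢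
        push_cast at this
        exact this
      have hrn : (r : ℝ) ≤ n := by exact_mod_cast (show r ≤ n by omega)
      have hd2 : ((N / 3 : ℕ) : ℝ) * (2 * Real.log 2) ≤ (2 * n + r) / 3 * (2 * Real.log 2) := by
        gcongr
      nlinarith [mul_nonneg (sub_nonneg.2 hrn)
        (show 0 ≤ 5 * Real.log 2 - 3 * Real.log 3 by linarith)]
    · have hup := choose_upper_sqrt (M := n) (by omega) h (fun p _ hpn _ _ => hpn)
      rw [← hN, ← hE] at hup
      have hlow := choose_lower (n := n) (by omega) n le_rfl
      have hmono : (2 * n + n).choose n ≤ N.choose n := Nat.choose_le_choose n (by omega)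
      have hfin : 4 ^ n * 3 ^ n ≤ 2 * n * 2 ^ n * (N ^ E * 4 ^ n) :=
        hlow.trans (Nat.mul_le_mul_left _ (hmono.trans hup))
      have hfin' : (4 : ℝ) ^ n * 3 ^ n ≤ 2 * n * 2 ^ n * (N ^ E * 4 ^ n) := by
        exact_mod_cast hfin
      have hl := Real.log_le_log (by positivity) hfin'
      rw [Real.log_mul (by positivity) (by positivity), Real.log_mul (by positivity) (by positivity),
        Real.log_mul (by positivity) (by positivity), Real.log_mul (by positivity) (by positivity),
        Real.log_mul (by positivity) (by positivity),
        Real.log_pow, Real.log_pow, Real.log_pow, Real.log_pow] at hl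
      nlinarith
  have hN17 : (N : ℝ) ≤ 17 * n := by exact_mod_cast (show N ≤ 17 * n by omega)
  have hlN : Real.log N ≤ Real.log 17 + Real.log n := by
    rw [← Real.log_mul (by norm_num) (by positivity)]
    exact Real.log_le_log hNpos hN17
  have hx := sqrt_ge hn
  have hsq : √(n : ℝ) * √(n : ℝ) = n := Real.mul_self_sqrt (by positivity)
  have hER : (E : ℝ) ≤ 5 + 4.124 * √(n : ℝ) / 3 := by
    have h1 : 3 * E ≤ Nat.sqrt N + 15 := by
      have := pi_le_three (Nat.sqrt N); omega
    have h1R : 3 * (E : ℝ) ≤ (Nat.sqrt N : ℝ) + 15 := by exact_mod_cast h1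
    have h2 : (Nat.sqrt N : ℝ) ≤ 4.124 * √(n : ℝ) := by
      refine Real.nat_sqrt_le_real_sqrt.trans ?_
      apply Real.sqrt_le_iff.2
      constructor
      · positivity
      · nlinarith
    linarith
  have hlog := log_le_sqrt hn
  have l17 := log17_lt
  have hlNb : Real.log N ≤ 9.1534 + √(n : ℝ) / 32 := by linarith
  have hEl : (E : ℝ) * Real.log N ≤ (5 + 4.124 * √(n : ℝ) / 3) * (9.1534 + √(n : ℝ) / 32) := by
    have h0 : 0 ≤ Real.log N := Real.log_natCast_nonneg N
    exact mul_le_mul hER hlNb h0 (by positivity)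
  have hfirst : (n : ℝ) * 0.4054 ≤ n * (Real.log 3 - Real.log 2) := by
    gcongr; linarith
  set x := √(n : ℝ)
  nlinarith

/-- For `m ≥ n ≥ 9`, `P(m,n)` is divisible by at least three distinct primes
strictly greater than `n`. -/
theorem stmt_13 (m n : ℕ) (hmn : m ≥ n) (hn : n ≥ 9) :
    ((P m n).primeFactors.filter (fun p => n < p)).card ≥ 3 := by
  by_cases h : n < 2048
  · exact small_case hmn hn h
  · by_contra hcon
    have hcard : ((P m n).primeFactors.filter (fun p => n < p)).card ≤ 2 := by omega
    by_cases hm : m < 16 * n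
    · exact large_low (by omega) hmn hm hcard
    · exact large_high (by omega) (by omega) hcard
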